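/- arXiv:2103.16691 — 2 statements merged into one kernel-verified Lean document; each statement's English description precedes it below -/
import Mathlib

section
/- The five elements x³, y³, α, β, γ of A are algebraically independent over k; consequently the k-subalgebra S of A generated by x³, y³, α, β, γ is isomorphic as a k-algebra to a polynomial ring in five variables (in particular γ is not integral over the subalgebra generated by x³, y³, α, β). -/
noncomputable section

open FreeAlgebra

variable (k : Type*) [Field k]

/-- Relations of the binary cubic generic Clifford algebra. -/
inductive GCRel : FreeAlgebra k (Fin 2) → FreeAlgebra k (Fin 2) → Prop
  | rel1 : GCRel ((ι k 0) ^ 3 * ι k 1) (ι k 1 * (ι k 0) ^ 3)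
  | rel2 : GCRel (ι k 0 * (ι k 1) ^ 3) ((ι k 1) ^ 3 * ι k 0)
  | rel3 : GCRel ((ι k 0) ^ 2 * (ι k 1) ^ 2 + (ι k 0 * ι k 1) ^ 2)
      ((ι k 1) ^ 2 * (ι k 0) ^ 2 + (ι k 1 * ι k 0) ^ 2)

/-- The binary cubic generic Clifford algebra. -/
abbrev GCA := RingQuot (GCRel k)

/-- The generator x. -/
def gx : GCA k := RingQuot.mkAlgHom k (GCRel k) (ι k 0)

/-- The generator y. -/
def gy : GCA k := RingQuot.mkAlgHom k (GCRel k) (ι k 1)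

/-- α = x²y + xyx + yx². -/
def gα : GCA k := gx k ^ 2 * gy k + gx k * gy k * gx k + gy k * gx k ^ 2

/-- β = xy² + yxy + y²x. -/
def gβ : GCA k := gx k * gy k ^ 2 + gy k * gx k * gy k + gy k ^ 2 * gx k

/-- γ = (xy)² − y²x². -/
def gγ : GCA k := (gx k * gy k) ^ 2 - gy k ^ 2 * gx k ^ 2

/-- δ = yx − ω·xy. -/
def gδ (ω : k) : GCA k := gy k * gx k - algebraMap k (GCA k) ω * (gx k * gy k)

end

section helpers

open MvPolynomial

/-- The matrix representing `x`. -/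
def mX {K : Type*} [Field K] (w s : K) : Matrix (Fin 3) (Fin 3) K :=
  !![s, 0, 0; 0, w * s, 0; 0, 0, (-1 - w) * s]

/-- The matrix representing `y`. -/
def mY {K : Type*} [Field K] (w d p q m : K) : Matrix (Fin 3) (Fin 3) K :=
  !![d, 1, m; -p - q * m, w * d, 1; q, p, (-1 - w) * d]

lemma mat_x3 {K : Type*} [Field K] (w s : K) (hw : w ^ 2 + w + 1 = 0) :
    mX w s ^ 3 = Matrix.scalar (Fin 3) (s ^ 3) := by
  ext i j
  fin_cases i <;> fin_cases j <;>
    simp [mX, pow_succ, Matrix.mul_apply, Fin.sum_univ_three] <;> grind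

lemma mat_y3 {K : Type*} [Field K] (w d p q m : K) (hw : w ^ 2 + w + 1 = 0) :
    mY w d p q m ^ 3 = Matrix.scalar (Fin 3)
      (d ^ 3 - d * (p * (2 + w) + q * m * (1 + 2 * w)) + q + m * p * (-p - q * m)) := by
  ext i j
  fin_cases i <;> fin_cases j <;>
    simp [mY, pow_succ, Matrix.mul_apply, Fin.sum_univ_three] <;> grind

lemma mat_a {K : Type*} [Field K] (w s d p q m : K) (hw : w ^ 2 + w + 1 = 0) :
    mX w s ^ 2 * mY w d p q m + mX w s * mY w d p q m * mX w s + mY w d p q m * mX w s ^ 2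
      = Matrix.scalar (Fin 3) (3 * s ^ 2 * d) := by
  ext i j
  fin_cases i <;> fin_cases j <;>
    simp [mX, mY, pow_succ, Matrix.mul_apply, Fin.sum_univ_three] <;> grind

lemma mat_b {K : Type*} [Field K] (w s d p q m : K) (hw : w ^ 2 + w + 1 = 0) :
    mX w s * mY w d p q m ^ 2 + mY w d p q m * mX w s * mY w d p q m + mY w d p q m ^ 2 * mX w s
      = Matrix.scalar (Fin 3)
        (3 * s * d ^ 2 - s * (p * (2 + w) + q * m * (1 + 2 * w))) := by
  ext i j
  fin_cases i <;> fin_cases j <;>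
    simp [mX, mY, pow_succ, Matrix.mul_apply, Fin.sum_univ_three] <;> grind

lemma mat_g {K : Type*} [Field K] (w s d p q m : K) (hw : w ^ 2 + w + 1 = 0) :
    (mX w s * mY w d p q m) ^ 2 - mY w d p q m ^ 2 * mX w s ^ 2
      = Matrix.scalar (Fin 3)
        (s ^ 2 * (p * (1 - w) - q * m * (1 + 2 * w))) := by
  ext i j
  fin_cases i <;> fin_cases j <;>
    simp [mX, mY, pow_succ, Matrix.mul_apply, Fin.sum_univ_three] <;> grind

/-- Solving for the parameters. -/
lemma exists_params {K : Type*} [Field K] [IsAlgClosed K] (h3 : (3 : K) ≠ 0)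
    (w : K) (hw : w ^ 2 + w + 1 = 0) (a b c e g : K) (ha : a ≠ 0)
    (ht : 27 * a ^ 2 * b + 2 * c ^ 3 - 9 * a * c * e ≠ 0) :
    ∃ s d p q m : K, s ^ 3 = a ∧
      d ^ 3 - d * (p * (2 + w) + q * m * (1 + 2 * w)) + q + m * p * (-p - q * m) = b ∧
      3 * s ^ 2 * d = c ∧
      3 * s * d ^ 2 - s * (p * (2 + w) + q * m * (1 + 2 * w)) = e ∧
      s ^ 2 * (p * (1 - w) - q * m * (1 + 2 * w)) = g := by
  obtain ⟨s, hs⟩ := IsAlgClosed.exists_pow_nat_eq a (n := 3) (by norm_num)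
  have hs0 : s ≠ 0 := by
    rintro rfl
    apply ha
    rw [← hs]; norm_num
  obtain ⟨d, hd⟩ : ∃ d, 3 * s ^ 2 * d = c := ⟨c / (3 * s ^ 2), by field_simp⟩
  obtain ⟨P, hP⟩ : ∃ P, 3 * s * d ^ 2 - s * P = e := ⟨3 * d ^ 2 - e / s, by field_simp; ring⟩
  obtain ⟨Q, hQ⟩ : ∃ Q, s ^ 2 * Q = g := ⟨g / s ^ 2, by field_simp⟩
  obtain ⟨p, hp⟩ : ∃ p, 3 * p = P + Q := ⟨(P + Q) / 3, by field_simp⟩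
  obtain ⟨n, hn⟩ : ∃ n, 3 * n = (-1 - w) * P + w * Q :=
    ⟨((-1 - w) * P + w * Q) / 3, by field_simp⟩
  have hP' : p * (2 + w) + n * (1 + 2 * w) = P := by
    apply mul_left_cancel₀ h3
    linear_combination (2 + w) * hp + (1 + 2 * w) * hn + (-2 * P + 2 * Q) * hw
  have hQ' : p * (1 - w) - n * (1 + 2 * w) = Q := by
    apply mul_left_cancel₀ h3
    linear_combination (1 - w) * hp - (1 + 2 * w) * hn + (2 * P - 2 * Q) * hw
  have ht' : b - d ^ 3 + d * P ≠ 0 := by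
    intro h
    apply ht
    rw [← hd, ← hP, ← hs]
    linear_combination 27 * s ^ 6 * h
  set t := b - d ^ 3 + d * P with htdef
  obtain ⟨q, hq0, hq⟩ : ∃ q : K, q ≠ 0 ∧ q ^ 2 - t * q + n * p * (-p - n) = 0 := by
    by_cases hz : n * p * (-p - n) = 0
    · exact ⟨t, ht', by rw [hz]; ring⟩
    · obtain ⟨q, hq⟩ := IsAlgClosed.exists_root
        (Polynomial.X ^ 2 - Polynomial.C t * Polynomial.X
          + Polynomial.C (n * p * (-p - n)) : Polynomial K) (by
            have : (Polynomial.X ^ 2 - Polynomial.C t * Polynomial.X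
              + Polynomial.C (n * p * (-p - n)) : Polynomial K).degree = 2 := by
              compute_degree!
            rw [this]; norm_num)
      have hq' : q ^ 2 - t * q + n * p * (-p - n) = 0 := by
        simpa [Polynomial.IsRoot] using hq
      refine ⟨q, ?_, hq'⟩
      rintro rfl
      apply hz
      linear_combination hq'
  obtain ⟨m, hm⟩ : ∃ m, q * m = n := ⟨n / q, by field_simp⟩
  refine ⟨s, d, p, q, m, hs, ?_, hd, ?_, ?_⟩
  · rw [hm, hP']
    apply mul_left_cancel₀ hq0
    linear_combination hq + p * (-p - n) * hm + q * htdef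
  · rw [hm, hP', hP]
  · rw [hm, hQ', hQ]

lemma gca_rel1 (k : Type*) [Field k] : gx k ^ 3 * gy k = gy k * gx k ^ 3 := by
  simpa [gx, gy] using RingQuot.mkAlgHom_rel k (GCRel.rel1 (k := k))

lemma gca_rel2 (k : Type*) [Field k] : gx k * gy k ^ 3 = gy k ^ 3 * gx k := by
  simpa [gx, gy] using RingQuot.mkAlgHom_rel k (GCRel.rel2 (k := k))

lemma gca_rel3 (k : Type*) [Field k] :
    gx k ^ 2 * gy k ^ 2 + (gx k * gy k) ^ 2 = gy k ^ 2 * gx k ^ 2 + (gy k * gx k) ^ 2 := by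
  simpa [gx, gy] using RingQuot.mkAlgHom_rel k (GCRel.rel3 (k := k))

/-- An element commuting with both generators is central (as far as `γ` etc. are concerned). -/
lemma central_comm (k : Type*) [Field k] (z : GCA k) (hx : Commute z (gx k))
    (hy : Commute z (gy k)) :
    Commute z (gx k ^ 3) ∧ Commute z (gy k ^ 3) ∧ Commute z (gα k) ∧ Commute z (gβ k)
      ∧ Commute z (gγ k) := by
  refine ⟨hx.pow_right 3, hy.pow_right 3, ?_, ?_, ?_⟩
  · exact (((hx.pow_right 2).mul_right hy).add_right ((hx.mul_right hy).mul_right hx)).add_right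
      (hy.mul_right (hx.pow_right 2))
  · exact ((hx.mul_right (hy.pow_right 2)).add_right ((hy.mul_right hx).mul_right hy)).add_right
      ((hy.pow_right 2).mul_right hx)
  · exact ((hx.mul_right hy).pow_right 2).sub_right ((hy.pow_right 2).mul_right (hx.pow_right 2))

lemma comm_x3 (k : Type*) [Field k] :
    Commute (gx k ^ 3) (gx k) ∧ Commute (gx k ^ 3) (gy k) :=
  ⟨(Commute.refl _).pow_left 3, gca_rel1 k⟩

lemma comm_y3 (k : Type*) [Field k] :
    Commute (gy k ^ 3) (gx k) ∧ Commute (gy k ^ 3) (gy k) :=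
  ⟨(gca_rel2 k).symm, (Commute.refl _).pow_left 3⟩

lemma comm_a (k : Type*) [Field k] :
    Commute (gα k) (gx k) ∧ Commute (gα k) (gy k) := by
  have h1 := gca_rel1 k
  have h3 := gca_rel3 k
  constructor
  · rw [Commute, SemiconjBy, gα, ← sub_eq_zero]
    rw [← sub_eq_zero] at h1
    rw [← neg_eq_zero, ← h1]
    noncomm_ring
  · rw [Commute, SemiconjBy, gα, ← sub_eq_zero]
    rw [← sub_eq_zero] at h3
    rw [← h3]
    noncomm_ring

lemma comm_b (k : Type*) [Field k] :
    Commute (gβ k) (gx k) ∧ Commute (gβ k) (gy k) := by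
  have h1 := gca_rel2 k
  have h3 := gca_rel3 k
  constructor
  · rw [Commute, SemiconjBy, gβ, ← sub_eq_zero]
    rw [← sub_eq_zero] at h3
    rw [← neg_eq_zero, ← h3]
    noncomm_ring
  · rw [Commute, SemiconjBy, gβ, ← sub_eq_zero]
    rw [← sub_eq_zero] at h1
    rw [← h1]
    noncomm_ring

/-- The five generators of `S`. -/
def gens (k : Type*) [Field k] : Fin 5 → GCA k :=
  ![gx k ^ 3, gy k ^ 3, gα k, gβ k, gγ k]

lemma gens_comm (k : Type*) [Field k] :
    ∀ a ∈ ({gx k ^ 3, gy k ^ 3, gα k, gβ k, gγ k} : Set (GCA k)),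
    ∀ b ∈ ({gx k ^ 3, gy k ^ 3, gα k, gβ k, gγ k} : Set (GCA k)), a * b = b * a := by
  have c0 := central_comm k _ (comm_x3 k).1 (comm_x3 k).2
  have c1 := central_comm k _ (comm_y3 k).1 (comm_y3 k).2
  have c2 := central_comm k _ (comm_a k).1 (comm_a k).2
  have c3 := central_comm k _ (comm_b k).1 (comm_b k).2
  obtain ⟨a0, a1, a2, a3, a4⟩ := c0
  obtain ⟨b0, b1, b2, b3, b4⟩ := c1
  obtain ⟨d0, d1, d2, d3, d4⟩ := c2
  obtain ⟨e0, e1, e2, e3, e4⟩ := c3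
  rintro a (rfl | rfl | rfl | rfl | rfl) b (rfl | rfl | rfl | rfl | rfl)
  exacts [a0, a1, a2, a3, a4, b0, b1, b2, b3, b4, d0, d1, d2, d3, d4, e0, e1, e2, e3, e4,
    a4.symm, b4.symm, d4.symm, e4.symm, rfl]

lemma gens_mem (k : Type*) [Field k] (i : Fin 5) :
    gens k i ∈ Algebra.adjoin k ({gx k ^ 3, gy k ^ 3, gα k, gβ k, gγ k} : Set (GCA k)) := by
  apply Algebra.subset_adjoin
  fin_cases i <;> simp [gens]

/-- The presentation of `S` as a quotient of a polynomial ring. -/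
lemma exists_phi (k : Type*) [Field k] :
    ∃ f : MvPolynomial (Fin 5) k →ₐ[k]
        Algebra.adjoin k ({gx k ^ 3, gy k ^ 3, gα k, gβ k, gγ k} : Set (GCA k)),
      ∀ i, (f (X i) : GCA k) = gens k i := by
  letI := Algebra.adjoinCommRingOfComm k (gens_comm k)
  exact ⟨aeval (fun i => ⟨gens k i, gens_mem k i⟩), fun i => by simp⟩

/-- The point evaluations of the generic Clifford algebra. -/
lemma exists_rep (k K : Type*) [Field k] [Field K] [IsAlgClosed K] [Algebra k K]
    (h3 : (3 : K) ≠ 0) (w : K) (hw : w ^ 2 + w + 1 = 0) (v : Fin 5 → K) (ha : v 0 ≠ 0)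
    (ht : 27 * v 0 ^ 2 * v 1 + 2 * v 2 ^ 3 - 9 * v 0 * v 2 * v 3 ≠ 0) :
    ∃ f : GCA k →ₐ[k] Matrix (Fin 3) (Fin 3) K,
      ∀ i, f (gens k i) = Matrix.scalar (Fin 3) (v i) := by
  obtain ⟨s, d, p, q, m, e0, e1, e2, e3, e4⟩ :=
    exists_params h3 w hw (v 0) (v 1) (v 2) (v 3) (v 4) ha ht
  have m0 := mat_x3 w s hw
  have m1 := mat_y3 w d p q m hw
  have m2 := mat_a w s d p q m hw
  have m3 := mat_b w s d p q m hw
  have m4 := mat_g w s d p q m hw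
  rw [e0] at m0
  rw [e1] at m1
  rw [e2] at m2
  rw [e3] at m3
  rw [e4] at m4
  generalize mX w s = x at *
  generalize mY w d p q m = y at *
  have hc : ∀ (r : K) (M : Matrix (Fin 3) (Fin 3) K),
      Matrix.scalar (Fin 3) r * M = M * Matrix.scalar (Fin 3) r := fun r M =>
    (Matrix.scalar_commute r (fun r' => mul_comm _ _) M)
  let F : FreeAlgebra k (Fin 2) →ₐ[k] Matrix (Fin 3) (Fin 3) K := FreeAlgebra.lift k ![x, y]
  have F0 : F (FreeAlgebra.ι k 0) = x := by simp [F]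
  have F1 : F (FreeAlgebra.ι k 1) = y := by simp [F]
  have hF : ∀ ⦃a b⦄, GCRel k a b → F a = F b := by
    intro a b hab
    cases hab with
    | rel1 => simp only [map_mul, map_pow, F0, F1, m0, hc]
    | rel2 => simp only [map_mul, map_pow, F0, F1, m1, hc]
    | rel3 =>
      simp only [map_mul, map_pow, map_add, F0, F1]
      have := hc (v 2) y
      rw [← m2, ← sub_eq_zero] at this
      rw [← sub_eq_zero, ← this]
      noncomm_ring
  refine ⟨RingQuot.liftAlgHom k ⟨F, hF⟩, ?_⟩
  have gX : RingQuot.liftAlgHom k ⟨F, hF⟩ (gx k) = x := by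
    rw [gx, RingQuot.liftAlgHom_mkAlgHom_apply, F0]
  have gY : RingQuot.liftAlgHom k ⟨F, hF⟩ (gy k) = y := by
    rw [gy, RingQuot.liftAlgHom_mkAlgHom_apply, F1]
  intro i
  fin_cases i
  · simp only [gens, Fin.zero_eta, Matrix.cons_val, map_pow, gX, m0]
  · simp only [gens, Fin.mk_one, Matrix.cons_val, map_pow, gY, m1]
  · simp only [gens, Fin.reduceFinMk, Matrix.cons_val, gα, map_add, map_mul, map_pow, gX, gY, m2]
  · simp only [gens, Fin.reduceFinMk, Matrix.cons_val, gβ, map_add, map_mul, map_pow, gX, gY, m3]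
  · simp only [gens, Fin.reduceFinMk, Matrix.cons_val, gγ, map_sub, map_mul, map_pow, gX, gY, ← m4]

lemma phi_injective (k : Type*) [Field k] (h3 : (3 : k) ≠ 0) (ω : k) (hω : ω ^ 2 + ω + 1 = 0)
    (f : MvPolynomial (Fin 5) k →ₐ[k] GCA k) (hf : ∀ i, f (X i) = gens k i) :
    Function.Injective f := by
  rw [injective_iff_map_eq_zero]
  intro p hp
  let K := AlgebraicClosure k
  have h3K : (3 : K) ≠ 0 := by
    have := (map_ne_zero (algebraMap k K)).2 h3
    rwa [map_ofNat] at this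
  have hwK : (algebraMap k K ω) ^ 2 + algebraMap k K ω + 1 = 0 := by
    have := congrArg (algebraMap k K) hω
    simpa using this
  let G : MvPolynomial (Fin 5) K :=
    X 0 * (27 * X 0 ^ 2 * X 1 + 2 * X 2 ^ 3 - 9 * X 0 * X 2 * X 3)
  have hG : G ≠ 0 := by
    intro h
    have := congrArg (MvPolynomial.eval (![1, 1, 0, 0, 0] : Fin 5 → K)) h
    simp [G] at this
    apply h3K
    have h27 : (3 : K) ^ 3 = 0 := by
      rw [← this]; norm_num
    exact pow_eq_zero_iff (by norm_num) |>.1 h27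
  have key : G * MvPolynomial.map (algebraMap k K) p = 0 := by
    apply MvPolynomial.funext
    intro v
    rw [map_mul, map_zero]
    by_cases hv : MvPolynomial.eval v G = 0
    · rw [hv, zero_mul]
    have hv' := hv
    simp only [G, map_mul, map_add, map_sub, map_pow, eval_X, map_ofNat, mul_ne_zero_iff,
      ← ne_eq] at hv'
    obtain ⟨r, hr⟩ := exists_rep k K h3K _ hwK v (by simpa using hv'.1) (by simpa using hv'.2)
    have hcomp : r.comp f =
        ((Matrix.scalarAlgHom (Fin 3) k : K →ₐ[k] Matrix (Fin 3) (Fin 3) K)).comp (aeval v) := by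
      ext1 i
      simp [hf, hr]
    have := congrArg (fun h => h p) hcomp
    simp only [AlgHom.comp_apply, hp, map_zero] at this
    have h0 : aeval v p = 0 := by
      have h1 := congrFun (congrFun this 0) 0
      simpa using h1.symm
    rw [MvPolynomial.eval_map, ← MvPolynomial.aeval_def, h0, mul_zero]
  have := (mul_eq_zero.1 key).resolve_left hG
  exact (MvPolynomial.map_injective _ (algebraMap k K).injective) (by rw [this, map_zero])

/-- Viewing the polynomial ring as univariate in the last variable. -/
lemma exists_theta (k : Type*) [Field k] :
    ∃ θ : MvPolynomial (Fin 5) k →ₐ[k] Polynomial (MvPolynomial (Fin 5) k),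
      θ (X 0) = Polynomial.C (X 0) ∧ θ (X 1) = Polynomial.C (X 1) ∧
      θ (X 2) = Polynomial.C (X 2) ∧ θ (X 3) = Polynomial.C (X 3) ∧ θ (X 4) = Polynomial.X :=
  ⟨aeval ![Polynomial.C (X 0), Polynomial.C (X 1), Polynomial.C (X 2), Polynomial.C (X 3),
    Polynomial.X], by simp, by simp, by simp, by simp, by simp⟩

end helpers

theorem stmt1 (k : Type*) [Field k] (h2 : (2 : k) ≠ 0) (h3 : (3 : k) ≠ 0)
    (ω : k) (hω : IsPrimitiveRoot ω 3) :
    LinearIndependent k (fun e : Fin 5 → ℕ =>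
        (gx k ^ 3) ^ e 0 * (gy k ^ 3) ^ e 1 * gα k ^ e 2 * gβ k ^ e 3 * gγ k ^ e 4) ∧
      Nonempty (MvPolynomial (Fin 5) k ≃ₐ[k]
        Algebra.adjoin k ({gx k ^ 3, gy k ^ 3, gα k, gβ k, gγ k} : Set (GCA k))) ∧
      ¬ ∃ (n : ℕ) (c : Fin n → Algebra.adjoin k ({gx k ^ 3, gy k ^ 3, gα k, gβ k} : Set (GCA k))),
          0 < n ∧ gγ k ^ n + ∑ i : Fin n, (c i : GCA k) * gγ k ^ (i : ℕ) = 0 := by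
  have hw : ω ^ 2 + ω + 1 = 0 := by
    have h := hω.geom_sum_eq_zero (by norm_num)
    simp [Finset.sum_range_succ] at h
    linear_combination h
  obtain ⟨f, hf⟩ := exists_phi k
  let g : MvPolynomial (Fin 5) k →ₐ[k] GCA k := (Subalgebra.val _).comp f
  have hg : ∀ i, g (MvPolynomial.X i) = gens k i := hf
  have ginj : Function.Injective g := phi_injective k h3 ω hw g hg
  have g0 : g (MvPolynomial.X 0) = gx k ^ 3 := hg 0
  have g1 : g (MvPolynomial.X 1) = gy k ^ 3 := hg 1
  have g2 : g (MvPolynomial.X 2) = gα k := hg 2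
  have g3 : g (MvPolynomial.X 3) = gβ k := hg 3
  have g4 : g (MvPolynomial.X 4) = gγ k := hg 4
  refine ⟨?_, ?_, ?_⟩
  · have h := (MvPolynomial.basisMonomials (Fin 5) k).linearIndependent.map' g.toLinearMap
      (LinearMap.ker_eq_bot.2 ginj)
    have h' := h.comp _ (Finsupp.equivFunOnFinite (α := Fin 5) (M := ℕ)).symm.injective
    refine Eq.subst (motive := fun u => LinearIndependent k u) ?_ h'
    funext e
    simp only [Function.comp, MvPolynomial.coe_basisMonomials, AlgHom.toLinearMap_apply]
    rw [MvPolynomial.monomial_eq, Finsupp.prod_fintype _ _ (by simp), Fin.prod_univ_five]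
    simp [g0, g1, g2, g3, g4, Finsupp.equivFunOnFinite]
    rfl
  · refine ⟨AlgEquiv.ofBijective f ⟨fun a b hab => ginj (congrArg Subtype.val hab), ?_⟩⟩
    rintro ⟨z, hz⟩
    have hle : Algebra.adjoin k ({gx k ^ 3, gy k ^ 3, gα k, gβ k, gγ k} : Set (GCA k))
        ≤ g.range := by
      apply Algebra.adjoin_le
      rintro a (rfl | rfl | rfl | rfl | rfl)
      exacts [⟨_, g0⟩, ⟨_, g1⟩, ⟨_, g2⟩, ⟨_, g3⟩, ⟨_, g4⟩]
    obtain ⟨p, hp⟩ := hle hz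
    exact ⟨p, Subtype.ext hp⟩
  · rintro ⟨n, c, -, hc⟩
    obtain ⟨θ, t0, t1, t2, t3, t4⟩ := exists_theta k
    have hle : Algebra.adjoin k ({gx k ^ 3, gy k ^ 3, gα k, gβ k} : Set (GCA k))
        ≤ ((Polynomial.CAlgHom (R := k) (A := MvPolynomial (Fin 5) k)).range.comap θ).map g := by
      apply Algebra.adjoin_le
      rintro a (rfl | rfl | rfl | rfl)
      · exact ⟨_, ⟨MvPolynomial.X 0, t0.symm⟩, g0⟩
      · exact ⟨_, ⟨MvPolynomial.X 1, t1.symm⟩, g1⟩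
      · exact ⟨_, ⟨MvPolynomial.X 2, t2.symm⟩, g2⟩
      · exact ⟨_, ⟨MvPolynomial.X 3, t3.symm⟩, g3⟩
    have hex : ∀ i, ∃ (C D : MvPolynomial (Fin 5) k), g C = c i ∧ θ C = Polynomial.C D := by
      intro i
      obtain ⟨C, ⟨D, hD⟩, hC⟩ := hle (c i).2
      exact ⟨C, D, hC, hD.symm⟩
    choose C D hC hD using hex
    have h1 : g (MvPolynomial.X 4 ^ n + ∑ i : Fin n, C i * MvPolynomial.X 4 ^ (i : ℕ)) = 0 := by
      rw [map_add, map_sum, map_pow, g4, ← hc]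
      congr 1
      refine Finset.sum_congr rfl fun i _ => ?_
      rw [map_mul, map_pow, g4, hC]
    have h2' := (injective_iff_map_eq_zero g).1 ginj _ h1
    have h4 := congrArg θ h2'
    simp only [map_add, map_sum, map_mul, map_pow, map_zero, hD, t4] at h4
    have hmon := Polynomial.monic_X_pow_add (n := n) (Polynomial.degree_sum_fin_lt D)
    exact hmon.ne_zero h4
end

section
/- The center of the binary cubic generic Clifford algebra A is exactly the k-subalgebra generated by the six elements x³, y³, α, β, γ, and δ³. -/
namespace GCAux

set_option linter.unusedSimpArgs false

/-! ### Generic noncommutative identities -/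

section generic

variable {k : Type*} [Field k] {B : Type*} [Ring B] [Algebra k B]

/-- A quantum triple: the PBW presentation of the algebra. -/
structure QT (ω : k) (X D Y P Q : B) : Prop where
  yx : Y * X = ω • (X * Y) + D
  dx : D * X = ω ^ 2 • (X * D) + P
  yd : Y * D = ω ^ 2 • (D * Y) + Q
  px : P * X = X * P
  py : P * Y = Y * P
  qx : Q * X = X * Q
  qy : Q * Y = Y * Q

variable {ω : k} {X D Y P Q : B}

theorem QT.pd (h : QT ω X D Y P Q) : P * D = D * P := by
  have : D = Y * X - ω • (X * Y) := by rw [h.yx]; abel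
  rw [this, mul_sub, sub_mul, ← mul_assoc, h.py, mul_assoc, h.px, mul_smul_comm, smul_mul_assoc,
    ← mul_assoc P, h.px, mul_assoc X, h.py, mul_assoc, mul_assoc]

theorem QT.qd (h : QT ω X D Y P Q) : Q * D = D * Q := by
  have : D = Y * X - ω • (X * Y) := by rw [h.yx]; abel
  rw [this, mul_sub, sub_mul, ← mul_assoc, h.qy, mul_assoc, h.qx, mul_smul_comm, smul_mul_assoc,
    ← mul_assoc Q, h.qx, mul_assoc X, h.qy, mul_assoc, mul_assoc]

theorem asc {a b c : B} (h : a * b = c) (z : B) : a * (b * z) = c * z := by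
  rw [← mul_assoc, h]

theorem QT.gamma_eq (hω : ω ^ 2 + ω + 1 = 0) (h : QT ω X D Y P Q) :
    (X * Y) ^ 2 - Y ^ 2 * X ^ 2 =
      (1 - ω) • (X * (D * Y)) + D ^ 2 + ω • (P * Y + Q * X) := by
  simp only [pow_two, mul_assoc, h.yx, asc h.yx, h.dx, asc h.dx, h.yd, asc h.yd, mul_add, add_mul,
    smul_add, smul_mul_assoc, mul_smul_comm, h.px, asc h.px, h.py, asc h.py, h.qx, asc h.qx,
    h.qy, asc h.qy, h.pd, h.qd]
  match_scalars
  all_goals grind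

theorem QT.gamma_x (hω : ω ^ 2 + ω + 1 = 0) (h : QT ω X D Y P Q) :
    ((X * Y) ^ 2 - Y ^ 2 * X ^ 2) * X = X * ((X * Y) ^ 2 - Y ^ 2 * X ^ 2) := by
  rw [h.gamma_eq hω]
  simp only [pow_two, mul_assoc, h.yx, asc h.yx, h.dx, asc h.dx, h.yd, asc h.yd, mul_add, add_mul,
    smul_add, smul_mul_assoc, mul_smul_comm, h.px, asc h.px, h.py, asc h.py, h.qx, asc h.qx,
    h.qy, asc h.qy, h.pd, h.qd, asc h.pd, asc h.qd]
  match_scalars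
  all_goals grind

theorem QT.gamma_y (hω : ω ^ 2 + ω + 1 = 0) (h : QT ω X D Y P Q) :
    ((X * Y) ^ 2 - Y ^ 2 * X ^ 2) * Y = Y * ((X * Y) ^ 2 - Y ^ 2 * X ^ 2) := by
  rw [h.gamma_eq hω]
  simp only [pow_two, mul_assoc, h.yx, asc h.yx, h.dx, asc h.dx, h.yd, asc h.yd, mul_add, add_mul,
    smul_add, smul_mul_assoc, mul_smul_comm, h.px, asc h.px, h.py, asc h.py, h.qx, asc h.qx,
    h.qy, asc h.qy, h.pd, h.qd, asc h.pd, asc h.qd]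
  match_scalars
  all_goals grind

theorem QT.d3x (hω : ω ^ 2 + ω + 1 = 0) (h : QT ω X D Y P Q) : D ^ 3 * X = X * D ^ 3 := by
  simp only [pow_succ, pow_zero, one_mul, mul_assoc, h.dx, asc h.dx, mul_add, add_mul,
    smul_add, smul_mul_assoc, mul_smul_comm, h.pd, asc h.pd]
  match_scalars
  all_goals grind

theorem QT.d3y (hω : ω ^ 2 + ω + 1 = 0) (h : QT ω X D Y P Q) : D ^ 3 * Y = Y * D ^ 3 := by
  simp only [pow_succ, pow_zero, one_mul, mul_assoc, h.yd, asc h.yd, mul_add, add_mul,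
    smul_add, smul_mul_assoc, mul_smul_comm, h.qd, asc h.qd]
  match_scalars
  all_goals grind

theorem QT.P_eq (hω : ω ^ 2 + ω + 1 = 0) (h : QT ω X D Y P Q) :
    X ^ 2 * Y + X * Y * X + Y * X ^ 2 = P := by
  simp only [pow_two, mul_assoc, h.yx, asc h.yx, h.dx, asc h.dx, mul_add, add_mul,
    smul_add, smul_mul_assoc, mul_smul_comm]
  match_scalars
  all_goals grind

theorem QT.Q_eq (hω : ω ^ 2 + ω + 1 = 0) (h : QT ω X D Y P Q) :
    X * Y ^ 2 + Y * X * Y + Y ^ 2 * X = Q := by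
  simp only [pow_two, mul_assoc, h.yx, asc h.yx, h.yd, asc h.yd, mul_add, add_mul,
    smul_add, smul_mul_assoc, mul_smul_comm]
  match_scalars
  all_goals grind

theorem QT.rel1 (hω : ω ^ 2 + ω + 1 = 0) (h : QT ω X D Y P Q) : X ^ 3 * Y = Y * X ^ 3 := by
  have := h.px
  rw [← h.P_eq hω, ← sub_eq_zero] at this
  rw [← sub_eq_zero, ← neg_eq_zero, ← this]
  noncomm_ring

theorem QT.rel2 (hω : ω ^ 2 + ω + 1 = 0) (h : QT ω X D Y P Q) : X * Y ^ 3 = Y ^ 3 * X := by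
  have := h.qy
  rw [← h.Q_eq hω, ← sub_eq_zero] at this
  rw [← sub_eq_zero, ← this]
  noncomm_ring

theorem QT.rel3 (hω : ω ^ 2 + ω + 1 = 0) (h : QT ω X D Y P Q) :
    X ^ 2 * Y ^ 2 + (X * Y) ^ 2 = Y ^ 2 * X ^ 2 + (Y * X) ^ 2 := by
  have := h.py
  rw [← h.P_eq hω, ← sub_eq_zero] at this
  rw [← sub_eq_zero, ← this]
  noncomm_ring

theorem QT.of_rels (hω : ω ^ 2 + ω + 1 = 0) (h1 : X ^ 3 * Y = Y * X ^ 3)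
    (h2 : X * Y ^ 3 = Y ^ 3 * X)
    (h3 : X ^ 2 * Y ^ 2 + (X * Y) ^ 2 = Y ^ 2 * X ^ 2 + (Y * X) ^ 2) :
    QT ω X (Y * X - ω • (X * Y)) Y (X ^ 2 * Y + X * Y * X + Y * X ^ 2)
      (X * Y ^ 2 + Y * X * Y + Y ^ 2 * X) where
  yx := by abel
  dx := by
    simp only [pow_two, mul_assoc, mul_sub, sub_mul, smul_sub, smul_mul_assoc, mul_smul_comm]
    match_scalars
    all_goals grind
  yd := by
    simp only [pow_two, mul_assoc, mul_sub, sub_mul, smul_sub, smul_mul_assoc, mul_smul_comm]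
    match_scalars
    all_goals grind
  px := by
    rw [← sub_eq_zero] at h1 ⊢
    rw [← neg_eq_zero, ← h1]; noncomm_ring
  py := by
    rw [← sub_eq_zero] at h3 ⊢
    rw [← h3]; noncomm_ring
  qx := by
    rw [← sub_eq_zero] at h3 ⊢
    rw [← neg_eq_zero, ← h3]; noncomm_ring
  qy := by
    rw [← sub_eq_zero] at h2 ⊢
    rw [← h2]; noncomm_ring

end generic

/-! ### The PBW module -/

section model

variable {k : Type*} [Field k]

abbrev Ix := ℕ × ℕ × ℕ × ℕ × ℕ

/-- The module with basis the PBW monomials. -/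
abbrev V (k : Type*) [Field k] := Ix →₀ k

noncomputable def e (m n i j l : ℕ) : V k := Finsupp.single (m, n, i, j, l) 1

noncomputable def oX : V k →ₗ[k] V k :=
  Finsupp.linearCombination k fun t : Ix => e t.1 t.2.1 (t.2.2.1 + 1) t.2.2.2.1 t.2.2.2.2

noncomputable def oP : V k →ₗ[k] V k :=
  Finsupp.linearCombination k fun t : Ix => e (t.1 + 1) t.2.1 t.2.2.1 t.2.2.2.1 t.2.2.2.2

noncomputable def oQ : V k →ₗ[k] V k :=
  Finsupp.linearCombination k fun t : Ix => e t.1 (t.2.1 + 1) t.2.2.1 t.2.2.2.1 t.2.2.2.2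

noncomputable def De (ω : k) (m n j l : ℕ) : ℕ → V k
  | 0 => e m n 0 (j + 1) l
  | i + 1 => ω ^ 2 • oX (De ω m n j l i) + e (m + 1) n i j l

noncomputable def oD (ω : k) : V k →ₗ[k] V k :=
  Finsupp.linearCombination k fun t : Ix => De ω t.1 t.2.1 t.2.2.2.1 t.2.2.2.2 t.2.2.1

noncomputable def Y0 (ω : k) (m n l : ℕ) : ℕ → V k
  | 0 => e m n 0 0 (l + 1)
  | j + 1 => ω ^ 2 • oD ω (Y0 ω m n l j) + e m (n + 1) 0 j l

noncomputable def Ye (ω : k) (m n j l : ℕ) : ℕ → V k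
  | 0 => Y0 ω m n l j
  | i + 1 => ω • oX (Ye ω m n j l i) + De ω m n j l i

noncomputable def oY (ω : k) : V k →ₗ[k] V k :=
  Finsupp.linearCombination k fun t : Ix => Ye ω t.1 t.2.1 t.2.2.2.1 t.2.2.2.2 t.2.2.1

theorem oX_e (m n i j l : ℕ) : oX (e m n i j l : V k) = e m n (i + 1) j l := by
  simp [oX, e]

theorem oP_e (m n i j l : ℕ) : oP (e m n i j l : V k) = e (m + 1) n i j l := by
  simp [oP, e]

theorem oQ_e (m n i j l : ℕ) : oQ (e m n i j l : V k) = e m (n + 1) i j l := by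
  simp [oQ, e]

theorem oD_e (ω : k) (m n i j l : ℕ) : oD ω (e m n i j l : V k) = De ω m n j l i := by
  simp [oD, e]

theorem oY_e (ω : k) (m n i j l : ℕ) : oY ω (e m n i j l : V k) = Ye ω m n j l i := by
  simp [oY, e]

theorem ext_e {W : Type*} [AddCommGroup W] [Module k W] {S T : V k →ₗ[k] W}
    (h : ∀ m n i j l, S (e m n i j l) = T (e m n i j l)) : S = T := by
  apply Finsupp.lhom_ext'
  rintro ⟨m, n, i, j, l⟩
  apply LinearMap.ext_ring
  exact h m n i j l

theorem PX : (oP * oX : Module.End k (V k)) = oX * oP := by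
  apply ext_e; intros; simp [oX_e, oP_e]

theorem QX : (oQ * oX : Module.End k (V k)) = oX * oQ := by
  apply ext_e; intros; simp [oX_e, oQ_e]

theorem PX' (v : V k) : oP (oX v) = oX (oP v) := LinearMap.congr_fun PX v
theorem QX' (v : V k) : oQ (oX v) = oX (oQ v) := LinearMap.congr_fun QX v

theorem PD (ω : k) : (oP * oD ω : Module.End k (V k)) = oD ω * oP := by
  apply ext_e; intro m n i j l
  simp only [Module.End.mul_apply, oP_e, oD_e]
  induction i with
  | zero => simp [De, oP_e]
  | succ i ih => simp [De, oP_e, PX', ih]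

theorem QD (ω : k) : (oQ * oD ω : Module.End k (V k)) = oD ω * oQ := by
  apply ext_e; intro m n i j l
  simp only [Module.End.mul_apply, oQ_e, oD_e]
  induction i with
  | zero => simp [De, oQ_e]
  | succ i ih => simp [De, oQ_e, QX', ih]

theorem PD' (ω : k) (v : V k) : oP (oD ω v) = oD ω (oP v) := LinearMap.congr_fun (PD ω) v
theorem QD' (ω : k) (v : V k) : oQ (oD ω v) = oD ω (oQ v) := LinearMap.congr_fun (QD ω) v

theorem PY (ω : k) : (oP * oY ω : Module.End k (V k)) = oY ω * oP := by
  apply ext_e; intro m n i j l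
  simp only [Module.End.mul_apply, oP_e, oY_e]
  induction i with
  | zero =>
    simp only [Ye]
    induction j with
    | zero => simp [Y0, oP_e]
    | succ j ih => simp [Y0, oP_e, PD', ih]
  | succ i ih => simp only [Ye, map_add, map_smul, PX', ih, ← oD_e, PD', oP_e]

theorem QY (ω : k) : (oQ * oY ω : Module.End k (V k)) = oY ω * oQ := by
  apply ext_e; intro m n i j l
  simp only [Module.End.mul_apply, oQ_e, oY_e]
  induction i with
  | zero =>
    simp only [Ye]
    induction j with
    | zero => simp [Y0, oQ_e]
    | succ j ih => simp [Y0, oQ_e, QD', ih]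
  | succ i ih => simp only [Ye, map_add, map_smul, QX', ih, ← oD_e, QD', oQ_e]

theorem YX (ω : k) : (oY ω * oX : Module.End k (V k)) = ω • (oX * oY ω) + oD ω := by
  apply ext_e; intro m n i j l
  simp [oX_e, oY_e, oD_e, Ye]

theorem DX (ω : k) : (oD ω * oX : Module.End k (V k)) = ω ^ 2 • (oX * oD ω) + oP := by
  apply ext_e; intro m n i j l
  simp [oX_e, oP_e, oD_e, De]

theorem YX' (ω : k) (v : V k) : oY ω (oX v) = ω • oX (oY ω v) + oD ω v :=
  LinearMap.congr_fun (YX ω) v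
theorem DX' (ω : k) (v : V k) : oD ω (oX v) = ω ^ 2 • oX (oD ω v) + oP v :=
  LinearMap.congr_fun (DX ω) v
theorem PY' (ω : k) (v : V k) : oP (oY ω v) = oY ω (oP v) := LinearMap.congr_fun (PY ω) v

theorem YD {ω : k} (hω : ω ^ 2 + ω + 1 = 0) :
    (oY ω * oD ω : Module.End k (V k)) = ω ^ 2 • (oD ω * oY ω) + oQ := by
  apply ext_e; intro m n i j l
  simp only [Module.End.mul_apply, LinearMap.add_apply, LinearMap.smul_apply]
  induction i with
  | zero => simp [oD_e, De, oY_e, Ye, Y0, oQ_e]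
  | succ i ih =>
    rw [← oX_e]
    simp only [DX', YX', map_add, map_smul, ih, QX', PY']
    match_scalars
    all_goals grind

theorem qt {ω : k} (hω : ω ^ 2 + ω + 1 = 0) :
    QT (B := Module.End k (V k)) ω oX (oD ω) (oY ω) oP oQ where
  yx := YX ω
  dx := DX ω
  yd := YD hω
  px := PX
  py := PY ω
  qx := QX
  qy := QY ω

/-! ### Filtration and leading terms -/

def dg (t : Ix) : ℕ := t.2.2.1 + t.2.2.2.1 + t.2.2.2.2

noncomputable def G (k : Type*) [Field k] (d : ℕ) : Submodule k (V k) :=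
  Finsupp.supported k k {t | dg t < d}

theorem G_mono {a b : ℕ} (h : a ≤ b) : G k a ≤ G k b :=
  Finsupp.supported_mono fun t (ht : dg t < a) => lt_of_lt_of_le ht h

theorem e_mem {m n i j l d : ℕ} (h : i + j + l < d) : (e m n i j l : V k) ∈ G k d :=
  Finsupp.single_mem_supported k _ h

theorem G_coeff {d : ℕ} {v : V k} (hv : v ∈ G k d) {t : Ix} (ht : d ≤ dg t) : v t = 0 := by
  by_contra hne
  have := (Finsupp.mem_supported k v).1 hv (Finsupp.mem_support_iff.2 hne)
  exact absurd this (not_lt.2 ht)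

theorem map_G {W : Type*} [AddCommGroup W] [Module k W] (T : V k →ₗ[k] W) {H : Submodule k W}
    {d : ℕ}
    (h : ∀ m n i j l, i + j + l < d → T (e m n i j l) ∈ H) {v : V k} (hv : v ∈ G k d) :
    T v ∈ H := by
  have : G k d ≤ H.comap T := by
    rw [G, Finsupp.supported_eq_span_single, Submodule.span_le]
    rintro _ ⟨⟨m, n, i, j, l⟩, ht, rfl⟩
    exact h m n i j l ht
  exact this hv

theorem X_G {d : ℕ} {v : V k} (hv : v ∈ G k d) : oX v ∈ G k (d + 1) :=
  map_G oX (fun m n i j l h => by rw [oX_e]; exact e_mem (by omega)) hv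

theorem P_G {d : ℕ} {v : V k} (hv : v ∈ G k d) : oP v ∈ G k d :=
  map_G oP (fun m n i j l h => by rw [oP_e]; exact e_mem (by omega)) hv

theorem Q_G {d : ℕ} {v : V k} (hv : v ∈ G k d) : oQ v ∈ G k d :=
  map_G oQ (fun m n i j l h => by rw [oQ_e]; exact e_mem (by omega)) hv

theorem De_sub (ω : k) (m n i j l : ℕ) :
    De ω m n j l i - ω ^ (2 * i) • e m n i (j + 1) l ∈ G k (i + j + l + 1) := by
  induction i with
  | zero => simp [De]
  | succ i ih =>
    have h1 := Submodule.smul_mem _ (ω ^ 2) (X_G ih)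
    have h2 : (e (m + 1) n i j l : V k) ∈ G k (i + j + l + 1 + 1) := e_mem (by omega)
    have h3 := add_mem h1 h2
    rw [map_sub, map_smul, oX_e] at h3
    have : i + 1 + j + l + 1 = i + j + l + 1 + 1 := by ring
    rw [this]
    convert h3 using 1
    simp only [De]
    module

theorem De_mem (ω : k) (m n i j l : ℕ) : De ω m n j l i ∈ G k (i + j + l + 2) := by
  have h := add_mem (G_mono (Nat.le_succ _) (De_sub ω m n i j l))
    (Submodule.smul_mem (G k (i + j + l + 2)) (ω ^ (2 * i))
      (e_mem (m := m) (n := n) (i := i) (j := j + 1) (l := l) (by omega)))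
  simpa using h

theorem D_G (ω : k) {d : ℕ} {v : V k} (hv : v ∈ G k d) : oD ω v ∈ G k (d + 1) :=
  map_G (oD ω) (fun m n i j l h => by
    rw [oD_e]; exact G_mono (by omega) (De_mem ω m n i j l)) hv

theorem Y0_sub (ω : k) (m n j l : ℕ) :
    Y0 ω m n l j - ω ^ (2 * j) • e m n 0 j (l + 1) ∈ G k (j + l + 1) := by
  induction j with
  | zero => simp [Y0]
  | succ j ih =>
    have h1 := Submodule.smul_mem _ (ω ^ 2) (D_G ω ih)
    have h2 : (e m (n + 1) 0 j l : V k) ∈ G k (j + l + 1 + 1) := e_mem (by omega)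
    have h3 := add_mem h1 h2
    rw [map_sub, map_smul, oD_e, De] at h3
    have : j + 1 + l + 1 = j + l + 1 + 1 := by ring
    rw [this]
    convert h3 using 1
    simp only [Y0]
    module

theorem Ye_sub (ω : k) (m n i j l : ℕ) :
    Ye ω m n j l i - ω ^ (i + 2 * j) • e m n i j (l + 1) ∈ G k (i + j + l + 1) := by
  induction i with
  | zero => simpa [Ye] using Y0_sub ω m n j l
  | succ i ih =>
    have h1 := Submodule.smul_mem _ ω (X_G ih)
    have h3 := add_mem h1 (De_mem ω m n i j l)
    rw [map_sub, map_smul, oX_e] at h3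
    have : i + 1 + j + l + 1 = i + j + l + 1 + 1 := by ring
    rw [this]
    convert h3 using 1
    simp only [Ye]
    module

theorem Y_G (ω : k) {d : ℕ} {v : V k} (hv : v ∈ G k d) : oY ω v ∈ G k (d + 1) :=
  map_G (oY ω) (fun m n i j l h => by
    rw [oY_e]
    have h := add_mem (G_mono (by omega : _ ≤ d + 1) (Ye_sub ω m n i j l))
      (Submodule.smul_mem (G k (d + 1)) (ω ^ (i + 2 * j))
      (e_mem (m := m) (n := n) (i := i) (j := j) (l := l + 1) (by omega)))
    simpa using h) hv

/-- `v` has leading term `u • e m n i j l`. -/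
def Ld (v : V k) (u : k) (m n i j l : ℕ) : Prop := v - u • e m n i j l ∈ G k (i + j + l)

theorem Ld_e (m n i j l : ℕ) : Ld (e m n i j l : V k) 1 m n i j l := by simp [Ld]

theorem Ld.mem {v : V k} {u : k} {m n i j l d : ℕ} (h : Ld v u m n i j l) (hd : i + j + l < d) :
    v ∈ G k d := by
  have := add_mem (G_mono hd.le h) (Submodule.smul_mem (G k d) u (e_mem (m := m) (n := n) hd))
  simpa using this

theorem Ld.X {v : V k} {u : k} {m n i j l : ℕ} (h : Ld v u m n i j l) :
    Ld (oX v) u m n (i + 1) j l := by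
  have := X_G h
  rw [map_sub, map_smul, oX_e] at this
  exact G_mono (by omega) this

theorem Ld.D (ω : k) {v : V k} {u : k} {m n i j l : ℕ} (h : Ld v u m n i j l) :
    Ld (oD ω v) (u * ω ^ (2 * i)) m n i (j + 1) l := by
  have := add_mem (D_G ω h) (Submodule.smul_mem _ u (De_sub ω m n i j l))
  rw [map_sub, map_smul, oD_e] at this
  unfold Ld
  rw [show i + (j + 1) + l = i + j + l + 1 by ring]
  convert this using 1
  module

theorem Ld.Y (ω : k) {v : V k} {u : k} {m n i j l : ℕ} (h : Ld v u m n i j l) :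
    Ld (oY ω v) (u * ω ^ (i + 2 * j)) m n i j (l + 1) := by
  have := add_mem (Y_G ω h) (Submodule.smul_mem _ u (Ye_sub ω m n i j l))
  rw [map_sub, map_smul, oY_e] at this
  unfold Ld
  rw [show i + j + (l + 1) = i + j + l + 1 by ring]
  convert this using 1
  module

theorem Ld.Xp {v : V k} {u : k} {m n i j l : ℕ} (h : Ld v u m n i j l) (p : ℕ) :
    Ld ((oX ^ p : Module.End k (V k)) v) u m n (i + p) j l := by
  induction p with
  | zero => simpa using h
  | succ p ih => rw [pow_succ']; exact ih.X

theorem Ld.Dp (ω : k) {v : V k} {u : k} {m n i j l : ℕ} (h : Ld v u m n i j l) (p : ℕ) :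
    Ld ((oD ω ^ p : Module.End k (V k)) v) (u * ω ^ (2 * i * p)) m n i (j + p) l := by
  induction p with
  | zero => simpa using h
  | succ p ih =>
    rw [pow_succ']
    have := ih.D ω
    rwa [mul_assoc, ← pow_add] at this

theorem Ld.Yp (ω : k) {v : V k} {u : k} {m n i j l : ℕ} (h : Ld v u m n i j l) (p : ℕ) :
    Ld ((oY ω ^ p : Module.End k (V k)) v) (u * ω ^ ((i + 2 * j) * p)) m n i j (l + p) := by
  induction p with
  | zero => simpa using h
  | succ p ih =>
    rw [pow_succ']
    have := ih.Y ω
    rwa [mul_assoc, ← pow_add] at this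

theorem Ld.Gam {ω : k} (hω : ω ^ 2 + ω + 1 = 0) {v : V k} {u : k} {m n i j l : ℕ}
    (h : Ld v u m n i j l) :
    Ld ((((oX * oY ω) ^ 2 - oY ω ^ 2 * oX ^ 2 : Module.End k (V k))) v)
      ((1 - ω) * (u * ω ^ (i + 2 * j) * ω ^ (2 * i))) m n (i + 1) (j + 1) (l + 1) := by
  rw [(qt hω).gamma_eq hω]
  have h1 := Submodule.smul_mem _ (1 - ω) ((h.Y ω).D ω).X
  have hv : v ∈ G k (i + j + l + 1) := h.mem (by omega)
  have h2 := D_G ω (D_G ω hv)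
  have h3 := Submodule.smul_mem _ ω (add_mem (P_G (Y_G ω hv)) (Q_G (X_G hv)))
  have h4 := add_mem (add_mem (G_mono (by omega) h1) h2) (G_mono (by omega) h3)
  unfold Ld
  rw [show i + 1 + (j + 1) + (l + 1) = i + j + l + 1 + 1 + 1 by ring]
  convert h4 using 1
  simp only [pow_two (oD ω), LinearMap.add_apply, LinearMap.smul_apply, Module.End.mul_apply]
  module

theorem Ld.Gamp {ω : k} (hω : ω ^ 2 + ω + 1 = 0) (h0 : ω ≠ 0) (h1 : 1 - ω ≠ 0) {v : V k}
    {u : k} (hu : u ≠ 0) {m n i j l : ℕ} (h : Ld v u m n i j l) (p : ℕ) :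
    ∃ u' : k, u' ≠ 0 ∧
    Ld (((((oX * oY ω) ^ 2 - oY ω ^ 2 * oX ^ 2) ^ p : Module.End k (V k))) v) u'
      m n (i + p) (j + p) (l + p) := by
  induction p with
  | zero => exact ⟨u, hu, by simpa using h⟩
  | succ p ih =>
    obtain ⟨u', hu', h'⟩ := ih
    refine ⟨_, ?_, by rw [pow_succ']; exact h'.Gam hω⟩
    simp [h0, h1, hu']

theorem Pp_e (p m n i j l : ℕ) :
    (oP ^ p : Module.End k (V k)) (e m n i j l) = e (m + p) n i j l := by
  induction p with
  | zero => simp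
  | succ p ih => rw [pow_succ', Module.End.mul_apply, ih, oP_e]; rfl

theorem Qp_e (p m n i j l : ℕ) :
    (oQ ^ p : Module.End k (V k)) (e m n i j l) = e m (n + p) i j l := by
  induction p with
  | zero => simp
  | succ p ih => rw [pow_succ', Module.End.mul_apply, ih, oQ_e]; rfl

/-- Coefficients of the leading part of the image of an operator. -/
theorem coeff_of_Ld (T : V k →ₗ[k] V k) (f : ℕ → ℕ → ℕ → k) (a b c : ℕ) (habc : a + b + c = 1)
    (hT : ∀ m n i j l, Ld (T (e m n i j l)) (f i j l) m n (i + a) (j + b) (l + c))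
    {d : ℕ} {v : V k} (hv : v ∈ G k (d + 1)) {m n i j l : ℕ} (ht : i + j + l = d) :
    T v (m, n, i + a, j + b, l + c) = f i j l * v (m, n, i, j, l) := by
  let T' : V k →ₗ[k] V k := Finsupp.linearCombination k fun t : Ix =>
    f t.2.2.1 t.2.2.2.1 t.2.2.2.2 • e t.1 t.2.1 (t.2.2.1 + a) (t.2.2.2.1 + b) (t.2.2.2.2 + c)
  have hT' : ∀ m n i j l, T' (e m n i j l) = f i j l • e m n (i + a) (j + b) (l + c) := by
    intro m n i j l; simp [T', e]
  have h1 : (T - T') v ∈ G k (d + 1) := by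
    refine map_G (T - T') (fun m n i j l h => ?_) hv
    rw [LinearMap.sub_apply, hT']
    exact G_mono (by omega) (hT m n i j l)
  have h2 := G_coeff h1 (t := (m, n, i + a, j + b, l + c)) (by simp only [dg]; omega)
  rw [LinearMap.sub_apply, Finsupp.sub_apply, sub_eq_zero] at h2
  rw [h2]
  have h3 : (Finsupp.lapply (m, n, i + a, j + b, l + c) : V k →ₗ[k] k) ∘ₗ T' =
      f i j l • (Finsupp.lapply (m, n, i, j, l) : V k →ₗ[k] k) := by
    apply ext_e
    intro m' n' i' j' l'
    simp only [LinearMap.comp_apply, hT', LinearMap.smul_apply, map_smul, Finsupp.lapply_apply]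
    simp only [e, Finsupp.single_apply, Prod.mk.injEq, add_left_inj, smul_eq_mul]
    split_ifs with h
    · obtain ⟨-, -, rfl, rfl, rfl⟩ := h; rfl
    · simp
  exact LinearMap.congr_fun h3 v

end model

/-! ### The algebra -/

section algebra

variable {k : Type*} [Field k]

theorem r1 : gx k ^ 3 * gy k = gy k * gx k ^ 3 := by
  simpa [gx, gy] using RingQuot.mkAlgHom_rel k (GCRel.rel1 (k := k))

theorem r2 : gx k * gy k ^ 3 = gy k ^ 3 * gx k := by
  simpa [gx, gy] using RingQuot.mkAlgHom_rel k (GCRel.rel2 (k := k))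

theorem r3 : gx k ^ 2 * gy k ^ 2 + (gx k * gy k) ^ 2
    = gy k ^ 2 * gx k ^ 2 + (gy k * gx k) ^ 2 := by
  simpa [gx, gy] using RingQuot.mkAlgHom_rel k (GCRel.rel3 (k := k))

theorem qtA {ω : k} (hω : ω ^ 2 + ω + 1 = 0) : QT ω (gx k) (gδ k ω) (gy k) (gα k) (gβ k) := by
  have := QT.of_rels hω (r1 (k := k)) r2 r3
  rw [Algebra.smul_def] at this
  exact this

theorem gen_ind {p : GCA k → Prop} (hc : ∀ c : k, p (algebraMap k _ c)) (hx : p (gx k))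
    (hy : p (gy k)) (ha : ∀ a b, p a → p b → p (a + b)) (hm : ∀ a b, p a → p b → p (a * b))
    (a : GCA k) : p a := by
  obtain ⟨b, rfl⟩ := RingQuot.mkAlgHom_surjective k (GCRel k) a
  induction b using FreeAlgebra.induction with
  | grade0 r => simpa using hc r
  | grade1 i => fin_cases i; exacts [hx, hy]
  | mul a b h1 h2 => rw [map_mul]; exact hm _ _ h1 h2
  | add a b h1 h2 => rw [map_add]; exact ha _ _ h1 h2

theorem mem_center_of {z : GCA k} (hx : z * gx k = gx k * z) (hy : z * gy k = gy k * z) :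
    z ∈ Subalgebra.center k (GCA k) := by
  rw [Subalgebra.mem_center_iff]
  intro b
  induction b using gen_ind with
  | hc c => exact Algebra.commutes c z
  | hx => exact hx.symm
  | hy => exact hy.symm
  | ha a b h1 h2 => rw [add_mul, mul_add, h1, h2]
  | hm a b h1 h2 => rw [mul_assoc, h2, ← mul_assoc, h1, mul_assoc]

/-- The representation on the PBW module. -/
noncomputable def rho {ω : k} (hω : ω ^ 2 + ω + 1 = 0) : GCA k →ₐ[k] Module.End k (V k) :=
  RingQuot.liftAlgHom k ⟨FreeAlgebra.lift k ![oX, oY ω], by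
    intro a b h
    cases h with
    | rel1 => simpa using (qt hω).rel1 hω
    | rel2 => simpa using (qt hω).rel2 hω
    | rel3 => simpa using (qt hω).rel3 hω⟩

section
variable {ω : k} (hω : ω ^ 2 + ω + 1 = 0)

theorem rho_x : rho hω (gx k) = oX := by simp [rho, gx]
theorem rho_y : rho hω (gy k) = oY ω := by simp [rho, gy]
theorem rho_d : rho hω (gδ k ω) = oD ω := by
  have := congrArg (rho hω) (qtA hω).yx
  simp only [map_mul, map_add, map_smul, rho_x, rho_y, (qt hω).yx] at this
  refine LinearMap.ext fun v => ?_
  have h := LinearMap.congr_fun this v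
  simp only [LinearMap.add_apply] at h
  exact (add_left_cancel h).symm
theorem rho_p : rho hω (gα k) = oP := by
  rw [gα, ← (qt hω).P_eq hω]
  simp only [map_mul, map_add, map_pow, rho_x, rho_y]
theorem rho_q : rho hω (gβ k) = oQ := by
  rw [gβ, ← (qt hω).Q_eq hω]
  simp only [map_mul, map_add, map_pow, rho_x, rho_y]
theorem rho_g : rho hω (gγ k) = (oX * oY ω) ^ 2 - oY ω ^ 2 * oX ^ 2 := by
  rw [gγ]
  simp only [map_mul, map_sub, map_pow, rho_x, rho_y]

/-- Evaluation at the vacuum vector. -/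
noncomputable def Phi : GCA k →ₗ[k] V k :=
  (LinearMap.applyₗ (e 0 0 0 0 0 : V k)) ∘ₗ (rho hω).toLinearMap

theorem Phi_apply (a : GCA k) : Phi hω a = rho hω a (e 0 0 0 0 0) := rfl

/-- PBW monomials. -/
noncomputable def mon (ω : k) (m n i j l : ℕ) : GCA k :=
  gx k ^ i * (gδ k ω ^ j * (gy k ^ l * (gβ k ^ n * gα k ^ m)))

noncomputable def Psi (ω : k) : V k →ₗ[k] GCA k :=
  Finsupp.linearCombination k fun t : Ix => mon ω t.1 t.2.1 t.2.2.1 t.2.2.2.1 t.2.2.2.2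

theorem Psi_e (m n i j l : ℕ) : Psi ω (e m n i j l) = mon ω m n i j l := by simp [Psi, e]

theorem mon_p (hω : ω ^ 2 + ω + 1 = 0) (m n i j l : ℕ) : mon ω (m + 1) n i j l = gα k * mon ω m n i j l := by
  have hx : Commute (gα k) (gx k) := (qtA hω).px
  have hy : Commute (gα k) (gy k) := (qtA hω).py
  have hd : Commute (gα k) (gδ k ω) := (qtA hω).pd
  have hq : Commute (gα k) (gβ k) :=
    ((hx.mul_right (hy.pow_right 2)).add_right ((hy.mul_right hx).mul_right hy)).add_right
      ((hy.pow_right 2).mul_right hx)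
  unfold mon
  rw [← mul_assoc (gα k), (hx.pow_right i).eq, mul_assoc, ← mul_assoc (gα k), (hd.pow_right j).eq,
    mul_assoc, ← mul_assoc (gα k), (hy.pow_right l).eq, mul_assoc, ← mul_assoc (gα k),
    (hq.pow_right n).eq, mul_assoc, ← pow_succ']

theorem mon_q (hω : ω ^ 2 + ω + 1 = 0) (m n i j l : ℕ) : mon ω m (n + 1) i j l = gβ k * mon ω m n i j l := by
  have hx : Commute (gβ k) (gx k) := (qtA hω).qx
  have hy : Commute (gβ k) (gy k) := (qtA hω).qy
  have hd : Commute (gβ k) (gδ k ω) := (qtA hω).qd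
  unfold mon
  rw [← mul_assoc (gβ k), (hx.pow_right i).eq, mul_assoc, ← mul_assoc (gβ k), (hd.pow_right j).eq,
    mul_assoc, ← mul_assoc (gβ k), (hy.pow_right l).eq, mul_assoc, ← mul_assoc (gβ k), ← pow_succ']

theorem mon_x (m n i j l : ℕ) : mon ω m n (i + 1) j l = gx k * mon ω m n i j l := by
  simp only [mon, pow_succ', mul_assoc]

theorem Psi_x (hω : ω ^ 2 + ω + 1 = 0) (v : V k) : Psi ω (oX v) = gx k * Psi ω v := by
  have : Psi ω ∘ₗ oX = LinearMap.mulLeft k (gx k) ∘ₗ Psi ω := by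
    apply ext_e; intros
    simp only [LinearMap.comp_apply, oX_e, Psi_e, mon_x, LinearMap.mulLeft_apply]
  exact LinearMap.congr_fun this v

theorem Psi_d (hω : ω ^ 2 + ω + 1 = 0) (v : V k) : Psi ω (oD ω v) = gδ k ω * Psi ω v := by
  have : Psi ω ∘ₗ oD ω = LinearMap.mulLeft k (gδ k ω) ∘ₗ Psi ω := by
    apply ext_e; intro m n i j l
    simp only [LinearMap.comp_apply, oD_e, Psi_e, LinearMap.mulLeft_apply]
    induction i with
    | zero => simp only [De, Psi_e, mon, pow_zero, one_mul, pow_succ', mul_assoc]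
    | succ i ih =>
      rw [De, map_add, map_smul, Psi_x hω, ih, Psi_e, mon_x, ← mul_assoc (gδ k ω), (qtA hω).dx, add_mul,
        mon_p hω, smul_mul_assoc, mul_assoc]
  exact LinearMap.congr_fun this v

theorem Psi_y (hω : ω ^ 2 + ω + 1 = 0) (v : V k) : Psi ω (oY ω v) = gy k * Psi ω v := by
  have : Psi ω ∘ₗ oY ω = LinearMap.mulLeft k (gy k) ∘ₗ Psi ω := by
    apply ext_e; intro m n i j l
    simp only [LinearMap.comp_apply, oY_e, Psi_e, LinearMap.mulLeft_apply]
    induction i with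
    | zero =>
      rw [Ye]
      induction j with
      | zero => simp only [Y0, Psi_e, mon, pow_zero, one_mul, pow_succ', mul_assoc]
      | succ j ih =>
        have : mon ω m n 0 (j + 1) l = gδ k ω * mon ω m n 0 j l := by
          simp only [mon, pow_zero, one_mul, pow_succ', mul_assoc]
        rw [Y0, map_add, map_smul, Psi_d hω, ih, Psi_e, this, ← mul_assoc (gy k), (qtA hω).yd,
          add_mul, mon_q hω, smul_mul_assoc, mul_assoc]
    | succ i ih =>
      rw [Ye, map_add, map_smul, Psi_x hω, ih, ← oD_e, Psi_d hω, Psi_e, mon_x,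
        ← mul_assoc (gy k), (qtA hω).yx, add_mul, smul_mul_assoc, mul_assoc]
  exact LinearMap.congr_fun this v

theorem Psi_rho (a : GCA k) : ∀ v, Psi ω (rho hω a v) = a * Psi ω v := by
  induction a using gen_ind with
  | hc c => intro v; simp [Algebra.smul_def, Module.algebraMap_end_apply]
  | hx => intro v; rw [rho_x, Psi_x hω]
  | hy => intro v; rw [rho_y, Psi_y hω]
  | ha a b h1 h2 => intro v; rw [map_add, LinearMap.add_apply, map_add, h1, h2, add_mul]
  | hm a b h1 h2 => intro v; rw [map_mul, Module.End.mul_apply, h1, h2, mul_assoc]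

theorem Psi_Phi (a : GCA k) : Psi ω (Phi hω a) = a := by
  rw [Phi_apply, Psi_rho, Psi_e]; simp [mon]

/-- The top coefficients of a central element sit at exponents congruent modulo three. -/
theorem top_coeff (hp : IsPrimitiveRoot ω 3) {z : GCA k} (hz : z ∈ Subalgebra.center k (GCA k))
    {d : ℕ} (hd : Phi hω z ∈ G k (d + 1)) {m n i j l : ℕ} (ht : i + j + l = d)
    (hne : Phi hω z (m, n, i, j, l) ≠ 0) : 3 ∣ l + 2 * j ∧ 3 ∣ i + 2 * j := by
  rw [Subalgebra.mem_center_iff] at hz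
  set v := Phi hω z with hv
  have hzv : Psi ω v = z := Psi_Phi hω z
  constructor
  · let R : V k →ₗ[k] V k := Phi hω ∘ₗ LinearMap.mulRight k (gx k) ∘ₗ Psi ω
    have hR : R v = oX v := by
      simp only [R, LinearMap.comp_apply, hzv, LinearMap.mulRight_apply]
      rw [← hz, Phi_apply, map_mul, rho_x]; rfl
    have c1 := coeff_of_Ld R (fun i j l => ω ^ (l + 2 * j)) 1 0 0 rfl (by
      intro m n i j l
      simp only [R, LinearMap.comp_apply, Psi_e, LinearMap.mulRight_apply, Phi_apply, mon,
        map_mul, map_pow, rho_x, rho_y, rho_d, rho_p, rho_q, Module.End.mul_apply, oX_e, Pp_e,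
        Qp_e]
      have := (((Ld_e (k := k) (0 + m) (0 + n) (0 + 1) 0 0).Yp ω l).Dp ω j).Xp i
      convert this using 1 <;> first | omega | skip
      simp only [one_mul, ← pow_add]; congr 1; ring) hd ht (m := m) (n := n)
    have c2 := coeff_of_Ld oX (fun i j l => (1 : k)) 1 0 0 rfl (by
      intro m n i j l
      exact (Ld_e m n i j l).X) hd ht (m := m) (n := n)
    rw [hR, c2] at c1
    have := mul_right_cancel₀ hne c1
    exact (hp.pow_eq_one_iff_dvd _).1 this.symm
  · let R : V k →ₗ[k] V k := Phi hω ∘ₗ LinearMap.mulRight k (gy k) ∘ₗ Psi ω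
    have hR : R v = oY ω v := by
      simp only [R, LinearMap.comp_apply, hzv, LinearMap.mulRight_apply]
      rw [← hz, Phi_apply, map_mul, rho_y]; rfl
    have c1 := coeff_of_Ld R (fun i j l => 1) 0 0 1 rfl (by
      intro m n i j l
      simp only [R, LinearMap.comp_apply, Psi_e, LinearMap.mulRight_apply, Phi_apply, mon,
        map_mul, map_pow, rho_x, rho_y, rho_d, rho_p, rho_q, Module.End.mul_apply, oY_e, Ye, Y0,
        Pp_e, Qp_e]
      have := (((Ld_e (k := k) (0 + m) (0 + n) 0 0 (0 + 1)).Yp ω l).Dp ω j).Xp i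
      convert this using 1 <;> first | omega | skip
      simp) hd ht (m := m) (n := n)
    have c2 := coeff_of_Ld (oY ω) (fun i j l => ω ^ (i + 2 * j)) 0 0 1 rfl (by
      intro m n i j l
      simpa using (Ld_e m n i j l).Y ω) hd ht (m := m) (n := n)
    rw [hR, c2] at c1
    have := mul_right_cancel₀ hne c1
    exact (hp.pow_eq_one_iff_dvd _).1 this

/-- The candidate for the center. -/
abbrev Zc (ω : k) : Subalgebra k (GCA k) := Algebra.adjoin k
        ({gx k ^ 3, gy k ^ 3, gα k, gβ k, gγ k, gδ k ω ^ 3} : Set (GCA k))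

theorem Zc_le (hω : ω ^ 2 + ω + 1 = 0) : Zc ω ≤ Subalgebra.center k (GCA k) := by
  apply Algebra.adjoin_le
  have q := qtA hω
  intro z hz
  simp only [Set.mem_insert_iff, Set.mem_singleton_iff] at hz
  rcases hz with rfl | rfl | rfl | rfl | rfl | rfl
  · exact mem_center_of (by rw [← pow_succ, ← pow_succ']) r1
  · exact mem_center_of r2.symm (by rw [← pow_succ, ← pow_succ'])
  · exact mem_center_of q.px q.py
  · exact mem_center_of q.qx q.qy
  · exact mem_center_of (q.gamma_x hω) (q.gamma_y hω)
  · exact mem_center_of (q.d3x hω) (q.d3y hω)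

theorem exists_lead (h0 : ω ≠ 0) (h1 : 1 - ω ≠ 0) {m n i j l : ℕ}
    (hl : 3 ∣ l + 2 * j) (hi : 3 ∣ i + 2 * j) :
    ∃ N ∈ Zc ω, Ld (Phi hω N) 1 m n i j l := by
  obtain ⟨r, a, b, c, rfl, rfl, rfl⟩ : ∃ r a b c, i = r + 3 * a ∧ j = 3 * b + r ∧ l = 3 * c + r :=
    ⟨j % 3, i / 3, j / 3, l / 3, by omega, by omega, by omega⟩
  have L1 := ((Ld_e (k := k) (0 + m) (0 + n) 0 0 0).Yp ω (3 * c)).Dp ω (3 * b)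
  obtain ⟨u, hu, L2⟩ := L1.Gamp hω h0 h1 (by simp [h0]) r
  have L3 := L2.Xp (3 * a)
  simp only [zero_add] at L3
  refine ⟨u⁻¹ • ((gx k ^ 3) ^ a * (gγ k ^ r * ((gδ k ω ^ 3) ^ b * ((gy k ^ 3) ^ c *
    (gβ k ^ n * gα k ^ m))))), ?_, ?_⟩
  · have g : ∀ w ∈ ({gx k ^ 3, gy k ^ 3, gα k, gβ k, gγ k, gδ k ω ^ 3} : Set (GCA k)),
      w ∈ Zc ω := fun w hw => Algebra.subset_adjoin hw
    refine Subalgebra.smul_mem _ (mul_mem (pow_mem (g _ ?_) _) (mul_mem (pow_mem (g _ ?_) _)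
      (mul_mem (pow_mem (g _ ?_) _) (mul_mem (pow_mem (g _ ?_) _) (mul_mem (pow_mem (g _ ?_) _)
      (pow_mem (g _ ?_) _)))))) _ <;> simp
  · have := Submodule.smul_mem _ u⁻¹ L3
    unfold Ld
    convert this using 1
    rw [map_smul, Phi_apply]
    simp only [map_mul, map_pow, rho_x, rho_y, rho_d, rho_p, rho_q, rho_g, Module.End.mul_apply,
      ← pow_mul, Pp_e, Qp_e, zero_add]
    rw [smul_sub, smul_smul, inv_mul_cancel₀ hu]

theorem center_le (hp : IsPrimitiveRoot ω 3) (d : ℕ) :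
    ∀ z ∈ Subalgebra.center k (GCA k), Phi hω z ∈ G k d → z ∈ Zc ω := by
  have h0 : ω ≠ 0 := hp.ne_zero (by norm_num)
  have h1 : 1 - ω ≠ 0 := sub_ne_zero.2 (hp.ne_one (by norm_num)).symm
  induction d with
  | zero =>
    intro z _ hd
    have : Phi hω z = 0 := by
      ext t
      exact G_coeff hd (Nat.zero_le _)
    rw [← Psi_Phi hω z, this, map_zero]
    exact zero_mem _
  | succ d ih =>
    intro z hz hd
    have key : ∀ t : Ix, ∃ N ∈ Zc ω, dg t = d → Phi hω z t ≠ 0 →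
        Finsupp.single t 1 - Phi hω N ∈ G k d := by
      rintro ⟨m, n, i, j, l⟩
      by_cases ht : i + j + l = d ∧ Phi hω z (m, n, i, j, l) ≠ 0
      · obtain ⟨a, b⟩ := top_coeff hω hp hz hd ht.1 ht.2
        obtain ⟨N, hN, hL⟩ := exists_lead hω h0 h1 (m := m) (n := n) a b
        refine ⟨N, hN, fun _ _ => ?_⟩
        rw [Ld, ht.1, one_smul] at hL
        rw [← neg_mem_iff, neg_sub]
        exact hL
      · exact ⟨0, zero_mem _, fun a b => absurd ⟨a, b⟩ ht⟩
    choose N hN hL using key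
    set v := Phi hω z with hv
    let w : GCA k := ∑ t ∈ v.support with dg t = d, v t • N t
    have hw : w ∈ Zc ω := sum_mem fun t _ => Subalgebra.smul_mem _ (hN t) _
    have hzw : z - w ∈ Zc ω := by
      refine ih _ (sub_mem hz (Zc_le hω hw)) ?_
      have e1 : v - ∑ t ∈ v.support with dg t = d, v t • Finsupp.single t (1 : k) ∈ G k d := by
        rw [G, Finsupp.mem_supported']
        intro t ht
        rw [Finsupp.sub_apply, Finsupp.finsetSum_apply]
        simp only [Finsupp.smul_apply, Finsupp.single_apply, smul_eq_mul, mul_ite, mul_one,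
          mul_zero, Finset.sum_ite_eq', Finset.mem_filter, Finsupp.mem_support_iff]
        have ht' : d ≤ dg t := not_lt.1 ht
        split_ifs with h
        · simp
        · rw [sub_zero]
          by_contra hne
          have hlt : ¬ (d + 1 ≤ dg t) := fun h' => hne (G_coeff hd h')
          exact h (Finset.mem_filter.2 ⟨Finsupp.mem_support_iff.2 hne, by omega⟩)
      have e2 : ∑ t ∈ v.support with dg t = d, v t • (Finsupp.single t (1 : k) - Phi hω (N t))
          ∈ G k d := by
        refine sum_mem fun t ht => Submodule.smul_mem _ _ ?_
        rw [Finset.mem_filter, Finsupp.mem_support_iff] at ht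
        exact hL t ht.2 ht.1
      have := add_mem e1 e2
      convert this using 1
      simp only [w, map_sub, map_sum, map_smul, smul_sub, Finset.sum_sub_distrib, ← hv]
      abel
    simpa using add_mem hzw hw

end

end algebra

end GCAux

theorem stmt6 (k : Type*) [Field k] (h2 : (2 : k) ≠ 0) (h3 : (3 : k) ≠ 0)
    (ω : k) (hω : IsPrimitiveRoot ω 3) :
    Subalgebra.center k (GCA k) =
      Algebra.adjoin k
        ({gx k ^ 3, gy k ^ 3, gα k, gβ k, gγ k, gδ k ω ^ 3} : Set (GCA k)) := by
  have h : ω ^ 2 + ω + 1 = 0 := by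
    have := hω.geom_sum_eq_zero (by norm_num)
    simp only [Finset.sum_range_succ, Finset.sum_range_zero] at this
    linear_combination this
  apply le_antisymm
  · intro z hz
    refine GCAux.center_le h hω ((GCAux.Phi h z).support.sup GCAux.dg + 1) z hz ?_
    rw [GCAux.G, Finsupp.mem_supported]
    intro t ht
    exact Nat.lt_succ_of_le (Finset.le_sup (f := GCAux.dg) ht)
  · exact GCAux.Zc_le h
end
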